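/- arXiv:1307.2169 — 2 statements merged into one kernel-verified Lean document; each statement's English description precedes it below -/
import Mathlib

section
/- Apart from the zero function, the one-parameter family y_α(x) = α e^{−αx} with α > 0 are the unique fixed points of T among nonnegative integrable functions on [0,∞): if y is nonnegative, integrable, and Ty = y (almost everywhere on [0,∞)), then either y = 0 almost everywhere or there exists α > 0 such that y(x) = α e^{−αx} almost everywhere. -/
/-!
The proof goes through the Laplace transform `M t = ∫₀^∞ y(x) e^{tx} dx`, `t < 0`.

Testing `Ty = y` against `(1 + t x) e^{tx}`, the derivative of `x e^{tx}`, and exchanging the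
integrals, the inner integral `∫₀^{u+v} (1 + t x) e^{tx} dx = (u + v) e^{t(u+v)}` cancels the
kernel `1 / (u + v)`, so that the right-hand side factors as `M t ^ 2` (`laplace_relation`).
Hence `M + t M' = M²` on `(-∞, 0)`. If `y` is not a.e. zero then `M > 0`, and the equation says
that `(1 / M t - 1) / t` is a constant `k`, i.e. `M t = 1 / (1 + k t)`. Positivity of `M` rules out
`k > 0`; for `k = 0` the transform would be constant, whereas `M' t = ∫ x y(x) e^{tx} dx > 0`.
So `k < 0` and, with `α = -1 / k`, `M t = α / (α - t)`, the transform of `α e^{-αx}`.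
Injectivity of the Laplace transform (`ae_eq_of_laplace_eq`) concludes.
-/

open MeasureTheory Set Real

/-- The gas-like market operator `T`:
`(Ty)(x) = ∬_{S(x)} y(u) y(v) / (u+v) du dv` with
`S(x) = {(u,v) : u > 0, v > 0, u + v > x}`. -/
noncomputable def Tgas (y : ℝ → ℝ) (x : ℝ) : ℝ :=
  ∫ p in {p : ℝ × ℝ | 0 < p.1 ∧ 0 < p.2 ∧ x < p.1 + p.2},
    y p.1 * y p.2 / (p.1 + p.2)

/-- The measure on `ℝ` with density `f` with respect to Lebesgue measure on `(0,∞)`; negative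
values of `f` count as `0`. -/
noncomputable def halfLineMeasure (f : ℝ → ℝ) : Measure ℝ :=
  (volume.restrict (Ioi (0:ℝ))).withDensity (fun x => ENNReal.ofReal (f x))

lemma aemeasurable_ofReal_density {f : ℝ → ℝ} (hf : IntegrableOn f (Ioi 0)) :
    AEMeasurable (fun x => ENNReal.ofReal (f x)) (volume.restrict (Ioi (0:ℝ))) :=
  hf.aestronglyMeasurable.aemeasurable.ennreal_ofReal

lemma isFiniteMeasure_halfLineMeasure {f : ℝ → ℝ} (hf : IntegrableOn f (Ioi 0)) :
    IsFiniteMeasure (halfLineMeasure f) :=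
  isFiniteMeasure_withDensity_ofReal hf.2

lemma integral_halfLineMeasure {f : ℝ → ℝ} (hf0 : ∀ x, 0 ≤ f x) (hf : IntegrableOn f (Ioi 0))
    (g : ℝ → ℝ) : ∫ x, g x ∂(halfLineMeasure f) = ∫ x in Ioi 0, f x * g x := by
  unfold halfLineMeasure
  rw [integral_withDensity_eq_integral_toReal_smul₀ (aemeasurable_ofReal_density hf)
    (Filter.Eventually.of_forall fun _ => ENNReal.ofReal_lt_top)]
  simp [ENNReal.toReal_ofReal (hf0 _)]

lemma integrable_halfLineMeasure_iff {f : ℝ → ℝ} (hf0 : ∀ x, 0 ≤ f x)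
    (hf : IntegrableOn f (Ioi 0)) (g : ℝ → ℝ) :
    Integrable g (halfLineMeasure f) ↔ IntegrableOn (fun x => f x * g x) (Ioi 0) := by
  unfold halfLineMeasure
  rw [integrable_withDensity_iff_integrable_smul₀' (aemeasurable_ofReal_density hf)
    (Filter.Eventually.of_forall fun _ => ENNReal.ofReal_lt_top)]
  simp [ENNReal.toReal_ofReal (hf0 _), IntegrableOn]

/-- Multiplying by a bounded continuous weight preserves integrability on the half-line. -/
lemma integrableOn_mul_of_bound {f g : ℝ → ℝ} (hf : IntegrableOn f (Ioi 0)) (hg : Continuous g)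
    (hb : ∀ x, 0 < x → |g x| ≤ 1) : IntegrableOn (fun x => f x * g x) (Ioi 0) := by
  refine Integrable.mono hf (hf.aestronglyMeasurable.mul hg.aestronglyMeasurable) ?_
  filter_upwards [ae_restrict_mem measurableSet_Ioi] with x hx
  rw [norm_mul]
  exact mul_le_of_le_one_right (norm_nonneg _) (hb x hx)

lemma abs_exp_mul_le {t x : ℝ} (ht : t ≤ 0) (hx : 0 < x) : |exp (t * x)| ≤ 1 := by
  rw [abs_exp, exp_le_one_iff]
  exact mul_nonpos_of_nonpos_of_nonneg ht hx.le

/-- The weight `(1 + t x) e^{tx}`, the derivative of `x e^{tx}`, is bounded by `1`. -/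
lemma abs_weight_le {t x : ℝ} (ht : t ≤ 0) (hx : 0 < x) : |(1 + t * x) * exp (t * x)| ≤ 1 := by
  have h : t * x ≤ 0 := mul_nonpos_of_nonpos_of_nonneg ht hx.le
  have h1 := add_one_le_exp (t * x)
  have h2 := add_one_le_exp (-(t * x))
  have h3 : exp (-(t * x)) * exp (t * x) = 1 := by rw [← exp_add]; simp
  have h4 := exp_pos (t * x)
  rw [abs_le]
  constructor <;> nlinarith

lemma mem_interior_integrableExpSet {f : ℝ → ℝ} (hf0 : ∀ x, 0 ≤ f x)
    (hf : IntegrableOn f (Ioi 0)) {t : ℝ} (ht : t < 0) :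
    t ∈ interior (ProbabilityTheory.integrableExpSet id (halfLineMeasure f)) := by
  rw [mem_interior]
  refine ⟨Iio 0, fun s hs => ?_, isOpen_Iio, ht⟩
  change Integrable _ _
  rw [integrable_halfLineMeasure_iff hf0 hf]
  exact integrableOn_mul_of_bound hf (by fun_prop) fun x hx => abs_exp_mul_le (le_of_lt hs) hx

/-- Injectivity of the Laplace transform. The densities are damped by `e^{-x}`, so that the
complex moment generating functions are analytic on `Re z < 1`; they agree at real points,
hence on the imaginary axis, where they are the characteristic functions. -/
lemma ae_eq_of_laplace_eq {f g : ℝ → ℝ} (hf0 : ∀ x, 0 ≤ f x) (hg0 : ∀ x, 0 ≤ g x)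
    (hf : IntegrableOn f (Ioi 0)) (hg : IntegrableOn g (Ioi 0))
    (h : ∀ t < 0, ∫ x in Ioi 0, f x * exp (t * x) = ∫ x in Ioi 0, g x * exp (t * x)) :
    ∀ᵐ x ∂(volume.restrict (Ioi (0:ℝ))), f x = g x := by
  have key : ∀ k : ℝ → ℝ, (∀ x, 0 ≤ k x) → IntegrableOn k (Ioi 0) →
      (∀ x, 0 ≤ k x * exp (-1 * x)) ∧ IntegrableOn (fun x => k x * exp (-1 * x)) (Ioi 0) ∧
      Iio 1 ⊆ interior (ProbabilityTheory.integrableExpSet id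
        (halfLineMeasure fun x => k x * exp (-1 * x))) ∧
      ∀ t, ProbabilityTheory.mgf id (halfLineMeasure fun x => k x * exp (-1 * x)) t =
        ∫ x in Ioi 0, k x * exp ((t - 1) * x) := by
    intro k hk0 hk
    have h0 : ∀ x, 0 ≤ k x * exp (-1 * x) := fun x => mul_nonneg (hk0 x) (exp_pos _).le
    have h1 : IntegrableOn (fun x => k x * exp (-1 * x)) (Ioi 0) :=
      integrableOn_mul_of_bound hk (by fun_prop) fun x hx => abs_exp_mul_le (by norm_num) hx
    have e : ∀ t x : ℝ, k x * exp (-1 * x) * exp (t * x) = k x * exp ((t - 1) * x) := by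
      intro t x
      rw [mul_assoc, ← exp_add]
      ring_nf
    refine ⟨h0, h1, interior_maximal (fun s hs => ?_) isOpen_Iio, fun t => ?_⟩
    · change Integrable _ _
      rw [integrable_halfLineMeasure_iff h0 h1]
      simp only [id, e]
      exact integrableOn_mul_of_bound hk (by fun_prop) fun x hx =>
        abs_exp_mul_le (by linarith [mem_Iio.1 hs]) hx
    · unfold ProbabilityTheory.mgf
      rw [integral_halfLineMeasure h0 h1]
      simp only [id, e]
  obtain ⟨f0, f1, f2, f3⟩ := key f hf0 hf
  obtain ⟨g0, g1, g2, g3⟩ := key g hg0 hg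
  have := isFiniteMeasure_halfLineMeasure f1
  have := isFiniteMeasure_halfLineMeasure g1
  have hS : IsPreconnected {z : ℂ | z.re < 1} := (convex_halfSpace_re_lt 1).isPreconnected
  have heq : Set.EqOn
      (ProbabilityTheory.complexMGF id (halfLineMeasure fun x => f x * exp (-1 * x)))
      (ProbabilityTheory.complexMGF id (halfLineMeasure fun x => g x * exp (-1 * x)))
      {z : ℂ | z.re < 1} := by
    refine AnalyticOnNhd.eqOn_of_preconnected_of_frequently_eq
      (ProbabilityTheory.analyticOnNhd_complexMGF.mono fun z hz => f2 hz)
      (ProbabilityTheory.analyticOnNhd_complexMGF.mono fun z hz => g2 hz)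
      hS (z₀ := ((0:ℝ) : ℂ)) (by simp) ?_
    have ht : Filter.Tendsto (fun x : ℝ => (x : ℂ)) (nhdsWithin 0 {0}ᶜ)
        (nhdsWithin ((0:ℝ) : ℂ) {((0:ℝ) : ℂ)}ᶜ) := by
      refine tendsto_nhdsWithin_of_tendsto_nhds_of_eventually_within _
        (Complex.continuous_ofReal.continuousAt.mono_left nhdsWithin_le_nhds) ?_
      filter_upwards [self_mem_nhdsWithin] with x hx
      simpa using hx
    refine ht.frequently (Filter.Eventually.frequently ?_)
    filter_upwards [nhdsWithin_le_nhds (Iio_mem_nhds (zero_lt_one' ℝ))] with x hx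
    rw [ProbabilityTheory.complexMGF_ofReal, ProbabilityTheory.complexMGF_ofReal, f3, g3,
      h _ (by linarith [mem_Iio.1 hx])]
  have hm : (halfLineMeasure fun x => f x * exp (-1 * x)) =
      halfLineMeasure fun x => g x * exp (-1 * x) := by
    refine Measure.ext_of_charFun (funext fun t => ?_)
    rw [← ProbabilityTheory.complexMGF_id_mul_I, ← ProbabilityTheory.complexMGF_id_mul_I]
    exact heq (by simp)
  unfold halfLineMeasure at hm
  rw [withDensity_eq_iff_of_sigmaFinite (aemeasurable_ofReal_density f1)
    (aemeasurable_ofReal_density g1)] at hm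
  filter_upwards [hm] with x hx
  rw [ENNReal.ofReal_eq_ofReal_iff (f0 x) (g0 x)] at hx
  exact mul_right_cancel₀ (exp_pos _).ne' hx

lemma integral_weight (t : ℝ) {s : ℝ} (hs : 0 ≤ s) :
    ∫ x in Ioo 0 s, (1 + t * x) * exp (t * x) = s * exp (t * s) := by
  rw [← integral_Ioc_eq_integral_Ioo, ← intervalIntegral.integral_of_le hs,
    intervalIntegral.integral_eq_sub_of_hasDerivAt (f := fun x => x * exp (t * x))]
  · simp
  · intro x _
    have := (hasDerivAt_id x).mul (((hasDerivAt_id x).const_mul t).exp)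
    convert! this using 1
    simp; ring
  · exact Continuous.intervalIntegrable (by fun_prop) _ _

/-- Testing the fixed point equation against `(1 + t x) e^{tx}` turns the right-hand side into
a square, since `∫₀ˢ (1 + t x) e^{tx} dx = s e^{ts}` cancels the kernel `1 / (u + v)`. -/
lemma laplace_relation {y : ℝ → ℝ} (hy0 : ∀ x, 0 ≤ y x) (hy : IntegrableOn y (Ioi 0))
    (hfix : ∀ᵐ x ∂(volume.restrict (Ioi (0:ℝ))), Tgas y x = y x) {t : ℝ} (ht : t < 0) :
    ∫ x in Ioi 0, y x * ((1 + t * x) * exp (t * x)) = (∫ x in Ioi 0, y x * exp (t * x)) ^ 2 := by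
  set ν : Measure ℝ := volume.restrict (Ioi (0:ℝ)) with hν
  set w : ℝ → ℝ := fun x => (1 + t * x) * exp (t * x) with hw
  set G : ℝ × ℝ → ℝ := fun p => y p.1 * y p.2 / (p.1 + p.2) with hG
  have hwc : Continuous w := by fun_prop
  have hA : MeasurableSet {q : ℝ × ℝ × ℝ | q.1 < q.2.1 + q.2.2} :=
    measurableSet_lt (by fun_prop) (by fun_prop)
  set F : ℝ × ℝ × ℝ → ℝ := {q : ℝ × ℝ × ℝ | q.1 < q.2.1 + q.2.2}.indicator
    (fun q => w q.1 * G q.2) with hF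
  have hyy : Integrable (fun p : ℝ × ℝ => y p.1 * y p.2) (ν.prod ν) := hy.mul_prod hy
  have hGm : AEStronglyMeasurable G (ν.prod ν) := by
    have : AEMeasurable G (ν.prod ν) :=
      hyy.aestronglyMeasurable.aemeasurable.div (by fun_prop)
    exact this.aestronglyMeasurable
  have hFm : AEStronglyMeasurable F (ν.prod (ν.prod ν)) :=
    (hwc.aestronglyMeasurable.comp_fst.mul hGm.comp_snd).indicator hA
  have hpos : ∀ᵐ p ∂(ν.prod ν), 0 < p.1 ∧ 0 < p.2 := by
    rw [hν, Measure.prod_restrict]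
    filter_upwards [ae_restrict_mem (measurableSet_Ioi.prod measurableSet_Ioi)] with p hp
    exact hp
  -- `F`, seen as a function of its first variable
  have hFx : ∀ p : ℝ × ℝ, (fun x => F (x, p)) =
      (Iio (p.1 + p.2)).indicator (fun x => w x * G p) := by
    intro p; ext x; simp [hF, indicator]
  have hIoo : ∀ p : ℝ × ℝ, ν.restrict (Iio (p.1 + p.2)) = volume.restrict (Ioo 0 (p.1 + p.2)) := by
    intro p
    rw [hν, Measure.restrict_restrict measurableSet_Iio, Iio_inter_Ioi]
  have hFint : Integrable F (ν.prod (ν.prod ν)) := by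
    rw [integrable_prod_iff' hFm]
    constructor
    · refine Filter.Eventually.of_forall fun p => ?_
      rw [hFx, integrable_indicator_iff measurableSet_Iio, IntegrableOn, hIoo]
      exact (Continuous.integrableOn_Icc (by fun_prop)).mono_set Ioo_subset_Icc_self
    · refine Integrable.mono' hyy hFm.norm.prod_swap.integral_prod_right' ?_
      filter_upwards [hpos] with p hp
      have hs : 0 < p.1 + p.2 := add_pos hp.1 hp.2
      have hG0 : 0 ≤ G p := div_nonneg (mul_nonneg (hy0 _) (hy0 _)) hs.le
      rw [norm_of_nonneg (integral_nonneg fun _ => norm_nonneg _)]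
      have e : (fun x => ‖F (x, p)‖) = (Iio (p.1 + p.2)).indicator (fun x => ‖w x‖ * G p) := by
        ext x
        rw [congrFun (hFx p) x, norm_indicator_eq_indicator_norm]
        simp [norm_mul, abs_of_nonneg hG0]
      rw [e, integral_indicator measurableSet_Iio, hIoo, integral_mul_const]
      have hle : ∫ x in Ioo 0 (p.1 + p.2), ‖w x‖ ≤ p.1 + p.2 := by
        have h1 : ∫ x in Ioo 0 (p.1 + p.2), ‖w x‖ ≤ ∫ x in Ioo 0 (p.1 + p.2), (1:ℝ) := by
          refine setIntegral_mono_on ?_ (by simp) measurableSet_Ioo fun x hx =>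
            abs_weight_le ht.le hx.1
          exact (Continuous.integrableOn_Icc (by fun_prop)).mono_set Ioo_subset_Icc_self
        simpa [hs.le] using h1
      calc _ ≤ (p.1 + p.2) * G p := mul_le_mul_of_nonneg_right hle hG0
        _ = y p.1 * y p.2 := by simp only [hG]; field_simp
  have swap := integral_integral_swap (f := fun x p => F (x, p)) hFint
  have hL : ∫ x, ∫ p, F (x, p) ∂(ν.prod ν) ∂ν = ∫ x in Ioi 0, y x * w x := by
    refine integral_congr_ae ?_
    filter_upwards [hfix] with x hx
    have e : (fun p => F (x, p)) =
        {p : ℝ × ℝ | x < p.1 + p.2}.indicator (fun p => w x * G p) := by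
      ext p; simp [hF, indicator]
    have hm : MeasurableSet {p : ℝ × ℝ | x < p.1 + p.2} :=
      measurableSet_lt (by fun_prop) (by fun_prop)
    rw [e, integral_indicator hm, integral_const_mul, ← hx, mul_comm, hν, Measure.prod_restrict,
      Measure.restrict_restrict hm, Tgas]
    congr 3
    ext p
    simp only [mem_inter_iff, mem_ofPred_eq, mem_prod, mem_Ioi]
    tauto
  have hR : ∫ p, ∫ x, F (x, p) ∂ν ∂(ν.prod ν) = (∫ x in Ioi 0, y x * exp (t * x)) ^ 2 := by
    rw [sq, ← hν, ← integral_prod_mul]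
    refine integral_congr_ae ?_
    filter_upwards [hpos] with p hp
    have hs : 0 < p.1 + p.2 := add_pos hp.1 hp.2
    rw [hFx, integral_indicator measurableSet_Iio, hIoo, integral_mul_const,
      integral_weight t hs.le]
    simp only [hG]
    rw [mul_add, exp_add]
    field_simp
  rw [← hL, swap, hR]

/-- apart from the zero function, the exponential densities
`α e^{-αx}`, `α > 0`, are the unique fixed points of `T` among nonnegative
integrable functions on `[0,∞)`. -/
theorem fixed_points_Tgas (y : ℝ → ℝ) (hy_nonneg : ∀ x, 0 ≤ y x)
    (hy_int : IntegrableOn y (Ioi 0))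
    (hfix : ∀ᵐ x ∂(volume.restrict (Ioi (0:ℝ))), Tgas y x = y x) :
    (∀ᵐ x ∂(volume.restrict (Ioi (0:ℝ))), y x = 0) ∨
      ∃ α > (0:ℝ), ∀ᵐ x ∂(volume.restrict (Ioi (0:ℝ))), y x = α * exp (-α * x) := by
  by_cases hz : ∀ᵐ x ∂(volume.restrict (Ioi (0:ℝ))), y x = 0
  · exact Or.inl hz
  right
  set M : ℝ → ℝ := fun t => ∫ x in Ioi 0, y x * exp (t * x) with hM
  set D : ℝ → ℝ := fun t => ∫ x in Ioi 0, y x * (x * exp (t * x)) with hD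
  have hMmgf : M = ProbabilityTheory.mgf id (halfLineMeasure y) := by
    ext t
    exact (integral_halfLineMeasure hy_nonneg hy_int (fun x => exp (t * x))).symm
  have hMi : ∀ t < 0, IntegrableOn (fun x => y x * exp (t * x)) (Ioi 0) := fun t ht =>
    integrableOn_mul_of_bound hy_int (by fun_prop) fun x hx => abs_exp_mul_le ht.le hx
  have hDi : ∀ t < 0, IntegrableOn (fun x => y x * (x * exp (t * x))) (Ioi 0) := by
    intro t ht
    have h1 := integrableOn_mul_of_bound hy_int (g := fun x => (1 + t * x) * exp (t * x))
      (by fun_prop) fun x hx => abs_weight_le ht.le hx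
    refine ((h1.sub (hMi t ht)).const_mul t⁻¹).congr (Filter.Eventually.of_forall fun x => ?_)
    have := ht.ne
    simp only [Pi.sub_apply]
    field_simp
    ring
  have hder : ∀ t < 0, HasDerivAt M (D t) t := by
    intro t ht
    have := ProbabilityTheory.hasDerivAt_mgf
      (mem_interior_integrableExpSet hy_nonneg hy_int ht)
    rw [hMmgf]
    convert! this using 1
    exact (integral_halfLineMeasure hy_nonneg hy_int (fun x => x * exp (t * x))).symm
  have hode : ∀ t < 0, M t + t * D t = M t ^ 2 := by
    intro t ht
    rw [hM, ← laplace_relation hy_nonneg hy_int hfix ht, hD, ← integral_const_mul,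
      ← integral_add (hMi t ht) ((hDi t ht).const_mul t)]
    congr 1; ext x; ring
  have hMpos : ∀ t < 0, 0 < M t := by
    intro t ht
    refine lt_of_le_of_ne (integral_nonneg fun x => mul_nonneg (hy_nonneg x) (exp_pos _).le)
      fun h => hz ?_
    have := (integral_eq_zero_iff_of_nonneg
      (fun x => mul_nonneg (hy_nonneg x) (exp_pos _).le) (hMi t ht)).1 h.symm
    filter_upwards [this] with x hx
    exact (mul_eq_zero.1 hx).resolve_right (exp_pos _).ne'
  have hDne : ∀ t < 0, D t ≠ 0 := by
    intro t ht h
    refine hz ?_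
    have h0 : ∀ᵐ x ∂(volume.restrict (Ioi (0:ℝ))), 0 ≤ y x * (x * exp (t * x)) := by
      filter_upwards [ae_restrict_mem measurableSet_Ioi] with x hx
      exact mul_nonneg (hy_nonneg x) (mul_nonneg (le_of_lt hx) (exp_pos _).le)
    have := (integral_eq_zero_iff_of_nonneg_ae h0 (hDi t ht)).1 h
    filter_upwards [this, ae_restrict_mem measurableSet_Ioi] with x hx hx0
    exact (mul_eq_zero.1 hx).resolve_right (mul_pos hx0 (exp_pos _)).ne'
  -- `(1 / M t - 1) / t` is a first integral of the differential equation.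
  obtain ⟨k, hk⟩ : ∃ k, ∀ t ∈ Iio (0:ℝ), ((M t)⁻¹ - 1) / t = k := by
    have hd : ∀ t < 0, HasDerivAt (fun t => ((M t)⁻¹ - 1) / t) 0 t := by
      intro t ht
      have h1 := (((hder t ht).inv (hMpos t ht).ne').sub_const 1).div (hasDerivAt_id t) ht.ne
      convert! h1 using 1
      have := (hMpos t ht).ne'
      have := ht.ne
      simp only [id, Pi.inv_apply]
      field_simp
      linarith [hode t ht]
    exact isOpen_Iio.exists_is_const_of_deriv_eq_zero isPreconnected_Iio
      (fun t ht => (hd t ht).differentiableAt.differentiableWithinAt)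
      (fun t ht => (hd t ht).deriv)
  have hMk : ∀ t < 0, (M t)⁻¹ = 1 + k * t := by
    intro t ht
    have := hk t ht
    have := ht.ne
    field_simp at *
    linarith
  have hk0 : k < 0 := by
    rcases lt_trichotomy k 0 with h | h | h
    · exact h
    · exfalso
      have h1 := hMk (-1) (by norm_num)
      have h2 := hode (-1) (by norm_num)
      rw [h, zero_mul, add_zero, inv_eq_one] at h1
      rw [h1] at h2
      exact hDne (-1) (by norm_num) (by linarith)
    · exfalso
      have hneg : -(2 / k) < 0 := by have := div_pos two_pos h; linarith
      have h1 := hMk _ hneg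
      have h2 := inv_pos.2 (hMpos _ hneg)
      have h3 : k * -(2 / k) = -2 := by field_simp
      linarith
  have hα : 0 < -k⁻¹ := by have := inv_lt_zero.2 hk0; linarith
  refine ⟨-k⁻¹, hα, ?_⟩
  refine ae_eq_of_laplace_eq hy_nonneg (fun x => mul_nonneg hα.le (exp_pos _).le) hy_int
    ((integrableOn_exp_mul_Ioi (by linarith) 0).const_mul _) fun t ht => ?_
  have e : ∀ x : ℝ, -k⁻¹ * exp (- -k⁻¹ * x) * exp (t * x) = -k⁻¹ * exp ((k⁻¹ + t) * x) := by
    intro x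
    rw [mul_assoc, ← exp_add]
    ring_nf
  simp only [e]
  rw [integral_const_mul, integral_exp_mul_Ioi (by linarith)]
  change M t = _
  rw [← inv_inv (M t), hMk t ht]
  have h1 : 1 + k * t ≠ 0 := by nlinarith
  have h2 : k⁻¹ + t ≠ 0 := by linarith
  have := hk0.ne
  rw [mul_zero, exp_zero, eq_comm]
  have h3 : k⁻¹ + t = k⁻¹ * (1 + k * t) := by field_simp
  rw [h3]
  field_simp
end

section
/- For every λ ∈ (0,1], the zero function and the family of exponential distributions y_δ(x) = δ e^{−δx}, δ > 0, are the only fixed points of T_λ among nonnegative integrable functions on [0,∞): T_λ y = y (almost everywhere) implies y = 0 almost everywhere or y(x) = δ e^{−δx} almost everywhere for some δ > 0, and conversely every such function is a fixed point of T_λ. -/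
/-!
Since `λ > 0`, the operators `T_λ` and `T` have the same fixed points. The forward direction goes
through the Laplace transform `Y(s) = ∫₀^∞ e^{-su} y(u) du`. Integrating `T y = y` against
`s e^{-sx}` and using Tonelli's theorem gives
`s Y(s) = ∬ y(u) y(v) (1 - e^{-s(u+v)}) / (u+v) du dv`. As `(1 - e^{-sw})/w = ∫₀^s e^{-tw} dt`, the
right-hand side equals `∫₀^s Y(t)² dt` (`lap_integral_eq`).

If `y` is not a.e. zero, then `Y > 0`, and `F(s) = s Y(s)` satisfies `F' = (F/s)²`. Hence `1/F - 1/s`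
is a constant `c` and `Y(s) = 1/(1 + cs)` (`lap_eq_of_integral_eq`). Since `Y` is strictly
decreasing, `c > 0`, so `Y` is the Laplace transform of the exponential density with `δ = 1/c`
(`exponential_of_lap`). The Laplace transform is injective (`lap_injective`): after tilting by
`e^{-u}`, the complex moment generating functions are analytic on `Re z < 1` and agree on the real
axis there, hence on the imaginary axis, so the characteristic functions agree.

Conversely, for `y(x) = δ e^{-δx}` the integrand of `T y` depends only on `w = u + v`, and the
integral reduces to `∫_x^∞ δ² e^{-δw} dw = δ e^{-δx}` (`Tgas_exp`).
-/

open MeasureTheory Set Real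

/-- The gas-like operator with effectiveness parameter `λ`:
`(T_λ y)(x) = (1 - λ) y(x) + λ (Ty)(x)`. -/
noncomputable def Tlam (l : ℝ) (y : ℝ → ℝ) : ℝ → ℝ :=
  fun x => (1 - l) * y x + l * Tgas y x


/-! ### Injectivity of the Laplace transform -/

/-- The Laplace transform `s ↦ ∫₀^∞ e^{-su} f(u) du`. -/
noncomputable def lap (f : ℝ → ℝ) (s : ℝ) : ℝ := ∫ u in Ioi (0:ℝ), exp (-s * u) * f u

theorem exp_neg_mul_le_one {s u : ℝ} (hs : 0 ≤ s) (hu : 0 < u) : exp (-s * u) ≤ 1 := by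
  rw [exp_le_one_iff]
  nlinarith

theorem integrableOn_exp_mul {f : ℝ → ℝ} (hf : IntegrableOn f (Ioi 0)) {s : ℝ} (hs : 0 ≤ s) :
    IntegrableOn (fun u => exp (-s * u) * f u) (Ioi 0) := by
  refine Integrable.bdd_mul (c := 1) hf (by fun_prop) ?_
  filter_upwards [ae_restrict_mem measurableSet_Ioi] with u hu
  rw [norm_eq_abs, abs_of_pos (exp_pos _)]
  exact exp_neg_mul_le_one hs hu

/-- The finite measure with density `e^{-u} f(u)` on `(0,∞)`. The factor `e^{-u}` makes its moment
generating function finite on `(-∞, 1)`, which contains `0`. -/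
noncomputable def tilted (f : ℝ → ℝ) : Measure ℝ :=
  (volume.restrict (Ioi (0:ℝ))).withDensity fun u => ENNReal.ofReal (exp (-u) * f u)

theorem aemeasurable_tilt {f : ℝ → ℝ} (hf : IntegrableOn f (Ioi 0)) :
    AEMeasurable (fun u => ENNReal.ofReal (exp (-u) * f u)) (volume.restrict (Ioi (0:ℝ))) := by
  have := hf.aemeasurable
  fun_prop

theorem isFiniteMeasure_tilted {f : ℝ → ℝ} (hf : IntegrableOn f (Ioi 0)) :
    IsFiniteMeasure (tilted f) := by
  refine isFiniteMeasure_withDensity_ofReal ?_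
  simpa using! (integrableOn_exp_mul hf zero_le_one).hasFiniteIntegral

theorem mgf_tilted {f : ℝ → ℝ} (hf : IntegrableOn f (Ioi 0)) (h0 : ∀ x, 0 ≤ f x) (t : ℝ) :
    ProbabilityTheory.mgf id (tilted f) t = lap f (1 - t) := by
  rw [ProbabilityTheory.mgf, tilted, integral_withDensity_eq_integral_toReal_smul₀
    (aemeasurable_tilt hf) (by simp), lap]
  congr 1
  ext u
  rw [ENNReal.toReal_ofReal (mul_nonneg (exp_pos _).le (h0 u)), smul_eq_mul, id,
    show -(1 - t) * u = -u + t * u by ring, exp_add]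
  ring

theorem Iio_subset_integrableExpSet {f : ℝ → ℝ} (hf : IntegrableOn f (Ioi 0))
    (h0 : ∀ x, 0 ≤ f x) :
    Iio 1 ⊆ interior (ProbabilityTheory.integrableExpSet id (tilted f)) := by
  refine interior_maximal (fun t ht => ?_) isOpen_Iio
  rw [ProbabilityTheory.integrableExpSet, mem_ofPred_eq, tilted,
    integrable_withDensity_iff_integrable_smul₀' (aemeasurable_tilt hf) (by simp)]
  refine (integrableOn_exp_mul hf (s := 1 - t) (by linarith [mem_Iio.1 ht])).congr
    (ae_of_all _ fun u => ?_)
  dsimp only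
  rw [ENNReal.toReal_ofReal (mul_nonneg (exp_pos _).le (h0 u)), smul_eq_mul, id,
    show -(1 - t) * u = -u + t * u by ring, exp_add]
  ring

/-- Injectivity of the Laplace transform on nonnegative integrable functions: equality of the
transforms on `(0,∞)` extends by analyticity to a half-plane containing the imaginary axis
(after tilting), so the characteristic functions agree. -/
theorem lap_injective {f g : ℝ → ℝ} (hf : IntegrableOn f (Ioi 0)) (hg : IntegrableOn g (Ioi 0))
    (hf0 : ∀ x, 0 ≤ f x) (hg0 : ∀ x, 0 ≤ g x) (h : ∀ s > 0, lap f s = lap g s) :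
    ∀ᵐ x ∂(volume.restrict (Ioi (0:ℝ))), f x = g x := by
  have := isFiniteMeasure_tilted hf
  have := isFiniteMeasure_tilted hg
  have hE : EqOn (ProbabilityTheory.complexMGF id (tilted f))
      (ProbabilityTheory.complexMGF id (tilted g)) {z : ℂ | z.re ∈ Iio (1:ℝ)} := by
    refine AnalyticOnNhd.eqOn_of_preconnected_of_frequently_eq (z₀ := ((0:ℝ) : ℂ))
      (ProbabilityTheory.analyticOnNhd_complexMGF.mono
        fun z hz => Iio_subset_integrableExpSet hf hf0 hz)
      (ProbabilityTheory.analyticOnNhd_complexMGF.mono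
        fun z hz => Iio_subset_integrableExpSet hg hg0 hz)
      ((convex_Iio (1:ℝ)).linear_preimage Complex.reLm).isPreconnected (by simp) ?_
    have hr : ∃ᶠ x : ℝ in nhdsWithin 0 {0}ᶜ, ProbabilityTheory.complexMGF id (tilted f) x
        = ProbabilityTheory.complexMGF id (tilted g) x := by
      refine Filter.Eventually.frequently ?_
      filter_upwards [nhdsWithin_le_nhds (Iio_mem_nhds zero_lt_one)] with x hx
      rw [ProbabilityTheory.complexMGF_ofReal, ProbabilityTheory.complexMGF_ofReal,
        mgf_tilted hf hf0, mgf_tilted hg hg0, h _ (by linarith [mem_Iio.1 hx])]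
    refine Filter.Tendsto.frequently (f := fun x : ℝ => (x : ℂ)) ?_ hr
    refine tendsto_nhdsWithin_iff.2 ⟨?_, ?_⟩
    · exact (Complex.continuous_ofReal.tendsto 0).mono_left nhdsWithin_le_nhds
    · filter_upwards [self_mem_nhdsWithin] with x hx
      simpa using hx
  have hm : tilted f = tilted g := by
    refine Measure.ext_of_charFun (funext fun t => ?_)
    rw [← ProbabilityTheory.complexMGF_id_mul_I, ← ProbabilityTheory.complexMGF_id_mul_I]
    exact hE (by simp)
  have hae := (withDensity_eq_iff_of_sigmaFinite (aemeasurable_tilt hf)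
    (aemeasurable_tilt hg)).1 hm
  filter_upwards [hae] with u hu
  rw [ENNReal.ofReal_eq_ofReal_iff (mul_nonneg (exp_pos _).le (hf0 u))
    (mul_nonneg (exp_pos _).le (hg0 u))] at hu
  exact mul_left_cancel₀ (exp_pos _).ne' hu

/-! ### Solving the equation for the Laplace transform -/

theorem continuousOn_lap {f : ℝ → ℝ} (hf : IntegrableOn f (Ioi 0)) :
    ContinuousOn (lap f) (Ici 0) := by
  have := hf.aestronglyMeasurable
  refine continuousOn_of_dominated (bound := fun u => ‖f u‖) (fun s _ => by fun_prop)
    (fun s hs => ?_) hf.norm (ae_of_all _ fun u => by fun_prop)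
  filter_upwards [ae_restrict_mem measurableSet_Ioi] with u hu
  rw [norm_mul, norm_eq_abs, abs_of_pos (exp_pos _)]
  exact mul_le_of_le_one_left (norm_nonneg _) (exp_neg_mul_le_one hs hu)

/-- Solving the integral equation `s Y(s) = ∫₀^s Y(t)² dt` for the Laplace transform: with
`F(s) = s Y(s)` one has `F' = (F/s)²`, so `1/F - 1/s` is constant. -/
theorem lap_eq_of_integral_eq {Y : ℝ → ℝ} (hc : ContinuousOn Y (Ici 0)) (hpos : ∀ s > 0, 0 < Y s)
    (h : ∀ s > 0, s * Y s = ∫ t in (0:ℝ)..s, Y t ^ 2) :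
    ∃ c, ∀ s > 0, Y s * (1 + c * s) = 1 := by
  have hd : ∀ s ∈ Ioi (0:ℝ), HasDerivAt (fun s => (s * Y s)⁻¹ - s⁻¹) 0 s := by
    intro s hs
    have hs' : 0 < s := hs
    have hY := hpos s hs
    have h1 : HasDerivAt (fun s => ∫ t in (0:ℝ)..s, Y t ^ 2) (Y s ^ 2) s := by
      refine intervalIntegral.integral_hasDerivAt_right ?_ ?_ ?_
      · refine ContinuousOn.intervalIntegrable ?_
        rw [uIcc_of_le hs'.le]
        exact (hc.mono Icc_subset_Ici_self).pow 2
      · exact ((hc.mono Ioi_subset_Ici_self).pow 2).stronglyMeasurableAtFilter isOpen_Ioi s hs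
      · exact (hc.continuousAt (Ici_mem_nhds hs')).pow 2
    have h2 : HasDerivAt (fun s => s * Y s) (Y s ^ 2) s :=
      h1.congr_of_eventuallyEq (by filter_upwards [Ioi_mem_nhds hs'] with t ht using h t ht)
    have h3 := (h2.fun_inv (by positivity)).sub (hasDerivAt_inv hs'.ne')
    refine h3.congr_deriv ?_
    field_simp
    ring
  refine ⟨(1 * Y 1)⁻¹ - 1⁻¹, fun s hs => ?_⟩
  have hE : (s * Y s)⁻¹ - s⁻¹ = (1 * Y 1)⁻¹ - 1⁻¹ :=
    isOpen_Ioi.is_const_of_deriv_eq_zero isPreconnected_Ioi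
      (fun x hx => (hd x hx).differentiableAt.differentiableWithinAt)
      (fun x hx => (hd x hx).deriv) hs (mem_Ioi.2 one_pos)
  rw [← hE]
  have := hpos s hs
  field_simp
  ring

theorem lap_exp {δ : ℝ} (hδ : 0 < δ) {s : ℝ} (hs : 0 < s) :
    lap (fun x => δ * exp (-δ * x)) s = δ / (s + δ) := by
  have h := integral_exp_mul_Ioi (a := -(s + δ)) (by linarith) 0
  rw [lap]
  calc _ = ∫ u in Ioi (0:ℝ), δ * exp (-(s + δ) * u) := by
        congr 1; ext u
        rw [show -(s + δ) * u = -s * u + -δ * u by ring, exp_add]; ring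
    _ = _ := by
        rw [integral_const_mul, h, mul_zero, exp_zero, neg_div_neg_eq]
        ring

theorem lap_pos {f : ℝ → ℝ} (hf : IntegrableOn f (Ioi 0)) (h0 : ∀ x, 0 ≤ f x)
    (hne : ¬ ∀ᵐ x ∂(volume.restrict (Ioi (0:ℝ))), f x = 0) {s : ℝ} (hs : 0 ≤ s) :
    0 < lap f s := by
  refine lt_of_le_of_ne (integral_nonneg fun u => mul_nonneg (exp_pos _).le (h0 u)) fun h => hne ?_
  have := (integral_eq_zero_iff_of_nonneg (fun u => mul_nonneg (exp_pos _).le (h0 u))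
    (integrableOn_exp_mul hf hs)).1 h.symm
  filter_upwards [this] with u hu
  simpa [(exp_pos _).ne'] using hu

theorem lap_two_lt_one {f : ℝ → ℝ} (hf : IntegrableOn f (Ioi 0)) (h0 : ∀ x, 0 ≤ f x)
    (hne : ¬ ∀ᵐ x ∂(volume.restrict (Ioi (0:ℝ))), f x = 0) :
    lap f 2 < lap f 1 := by
  have i1 := integrableOn_exp_mul hf zero_le_one
  have i2 := integrableOn_exp_mul hf zero_le_two
  have hle : ∀ u ∈ Ioi (0:ℝ), exp (-2 * u) < exp (-1 * u) := fun u hu =>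
    exp_lt_exp.2 (by linarith [mem_Ioi.1 hu])
  rw [← sub_pos, lap, lap, ← integral_sub i1 i2]
  have hnn : 0 ≤ᵐ[volume.restrict (Ioi (0:ℝ))]
      fun u => exp (-1 * u) * f u - exp (-2 * u) * f u := by
    filter_upwards [ae_restrict_mem measurableSet_Ioi] with u hu
    rw [← sub_mul]
    exact mul_nonneg (sub_nonneg.2 (hle u hu).le) (h0 u)
  refine lt_of_le_of_ne (integral_nonneg_of_ae hnn) fun h => hne ?_
  have := (integral_eq_zero_iff_of_nonneg_ae hnn (i1.sub i2)).1 h.symm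
  filter_upwards [this, ae_restrict_mem measurableSet_Ioi] with u hu hu0
  rw [← sub_mul] at hu
  exact (mul_eq_zero.1 hu).resolve_left (sub_pos.2 (hle u hu0)).ne'

theorem integrableOn_exp_density {δ : ℝ} (hδ : 0 < δ) :
    IntegrableOn (fun x => δ * exp (-δ * x)) (Ioi 0) :=
  (exp_neg_integrableOn_Ioi 0 hδ).const_mul δ

/-- If `f` is not a.e. zero, the integral equation for its Laplace transform forces `f` to be an
exponential density. -/
theorem exponential_of_lap {f : ℝ → ℝ} (hf : IntegrableOn f (Ioi 0)) (h0 : ∀ x, 0 ≤ f x)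
    (hne : ¬ ∀ᵐ x ∂(volume.restrict (Ioi (0:ℝ))), f x = 0)
    (h : ∀ s > 0, s * lap f s = ∫ t in (0:ℝ)..s, lap f t ^ 2) :
    ∃ δ > (0:ℝ), ∀ᵐ x ∂(volume.restrict (Ioi (0:ℝ))), f x = δ * exp (-δ * x) := by
  have hp : ∀ s > 0, 0 < lap f s := fun s hs => lap_pos hf h0 hne (le_of_lt hs)
  obtain ⟨c, hc⟩ := lap_eq_of_integral_eq (continuousOn_lap hf) hp h
  -- The transform is strictly decreasing, which excludes `c ≤ 0`.
  have hc0 : 0 < c := by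
    have h1 := hc 1 one_pos
    have h2 := hc 2 two_pos
    have h3 := hp 1 one_pos
    have h4 := hp 2 two_pos
    have h5 := lap_two_lt_one hf h0 hne
    by_contra! hcn
    nlinarith [mul_nonneg h4.le (neg_nonneg.2 hcn), mul_pos h3 h4]
  refine ⟨1 / c, by positivity, lap_injective hf (integrableOn_exp_density (by positivity)) h0
    (fun x => by positivity) fun s hs => ?_⟩
  rw [lap_exp (by positivity) hs]
  have := hc s hs
  have h6 : 0 < 1 + c * s := by positivity
  rw [← mul_right_cancel_iff_of_pos h6, this]
  field_simp
  ring

open scoped ENNReal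

/-! ### The operator `T` as an integral over the quadrant -/

/-- The integrand of `T` with values in `ℝ≥0∞`, where Tonelli's theorem needs no integrability. -/
noncomputable def gasKernel (y : ℝ → ℝ) (p : ℝ × ℝ) : ℝ≥0∞ :=
  ENNReal.ofReal (y p.1) * ENNReal.ofReal (y p.2) * ENNReal.ofReal (1 / (p.1 + p.2))

/-- Lebesgue measure on the open first quadrant. -/
noncomputable abbrev quadrant : Measure (ℝ × ℝ) :=
  (volume.restrict (Ioi (0:ℝ))).prod (volume.restrict (Ioi (0:ℝ)))

theorem measurableSet_sum_gt (x : ℝ) : MeasurableSet {p : ℝ × ℝ | x < p.1 + p.2} :=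
  measurableSet_lt measurable_const (measurable_fst.add measurable_snd)

theorem Tgas_eq_quadrant (y : ℝ → ℝ) (x : ℝ) :
    Tgas y x = ∫ p in {p : ℝ × ℝ | x < p.1 + p.2}, y p.1 * y p.2 / (p.1 + p.2) ∂quadrant := by
  rw [Tgas, quadrant, Measure.prod_restrict, Measure.restrict_restrict (measurableSet_sum_gt x)]
  congr 2
  ext p
  simp only [mem_ofPred_eq, mem_inter_iff, mem_prod, mem_Ioi]
  tauto

theorem ae_quadrant_pos : ∀ᵐ p ∂quadrant, 0 < p.1 ∧ 0 < p.2 := by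
  filter_upwards [Measure.quasiMeasurePreserving_fst.ae (ae_restrict_mem measurableSet_Ioi),
    Measure.quasiMeasurePreserving_snd.ae (ae_restrict_mem measurableSet_Ioi)] with p h1 h2
  exact ⟨h1, h2⟩

theorem Tgas_congr {y z : ℝ → ℝ} (h : ∀ᵐ x ∂(volume.restrict (Ioi (0:ℝ))), y x = z x) (x : ℝ) :
    Tgas y x = Tgas z x := by
  rw [Tgas_eq_quadrant, Tgas_eq_quadrant]
  refine integral_congr_ae (ae_restrict_of_ae ?_)
  filter_upwards [Measure.quasiMeasurePreserving_fst.ae h,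
    Measure.quasiMeasurePreserving_snd.ae h] with p h1 h2
  rw [h1, h2]

theorem Tgas_nonneg {y : ℝ → ℝ} (h0 : ∀ x, 0 ≤ y x) (x : ℝ) : 0 ≤ Tgas y x := by
  rw [Tgas]
  refine setIntegral_nonneg_of_ae_restrict ?_
  rw [Filter.EventuallyLE, ae_restrict_iff' ?_]
  · exact ae_of_all _ fun p hp =>
      div_nonneg (mul_nonneg (h0 _) (h0 _)) (add_pos hp.1 hp.2.1).le
  · exact (measurableSet_lt measurable_const measurable_fst).inter
      ((measurableSet_lt measurable_const measurable_snd).inter (measurableSet_sum_gt x))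

theorem aemeasurable_gasKernel {y : ℝ → ℝ} (hy : IntegrableOn y (Ioi 0)) :
    AEMeasurable (gasKernel y) quadrant := by
  have h1 : AEMeasurable (fun p : ℝ × ℝ => y p.1) quadrant := hy.aemeasurable.comp_fst
  have h2 : AEMeasurable (fun p : ℝ × ℝ => y p.2) quadrant := hy.aemeasurable.comp_snd
  exact (h1.ennreal_ofReal.mul h2.ennreal_ofReal).mul (Measurable.aemeasurable (by fun_prop))

/-- For `x > 0` the weight `1/(u+v)` is bounded by `1/x` on the region of integration, so the
Bochner integral defining `T` converges and equals the `ℝ≥0∞`-valued integral. -/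
theorem ofReal_Tgas {y : ℝ → ℝ} (hy : IntegrableOn y (Ioi 0)) (h0 : ∀ x, 0 ≤ y x)
    {x : ℝ} (hx : 0 < x) :
    ENNReal.ofReal (Tgas y x) = ∫⁻ p in {p : ℝ × ℝ | x < p.1 + p.2}, gasKernel y p ∂quadrant := by
  have hmem := ae_restrict_mem (μ := quadrant) (measurableSet_sum_gt x)
  rw [Tgas_eq_quadrant, ofReal_integral_eq_lintegral_ofReal]
  · refine lintegral_congr_ae ?_
    filter_upwards [hmem] with p hp
    rw [gasKernel, ← ENNReal.ofReal_mul (h0 _), ← ENNReal.ofReal_mul (mul_nonneg (h0 _) (h0 _)),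
      mul_one_div]
  · have hI : Integrable (fun p : ℝ × ℝ => y p.1 * y p.2) quadrant := Integrable.mul_prod hy hy
    have hI' : Integrable (fun p : ℝ × ℝ => y p.1 * y p.2 * (1 / (p.1 + p.2)))
        (quadrant.restrict {p : ℝ × ℝ | x < p.1 + p.2}) := by
      refine Integrable.mul_bdd (c := 1 / x) hI.restrict
        (Measurable.aestronglyMeasurable (by fun_prop)) ?_
      filter_upwards [hmem] with p hp
      have hp' : x < p.1 + p.2 := hp
      rw [norm_eq_abs, abs_of_pos (one_div_pos.2 (hx.trans hp'))]
      exact one_div_le_one_div_of_le hx hp'.le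
    simpa only [mul_one_div] using hI'
  · filter_upwards [hmem] with p hp
    exact div_nonneg (mul_nonneg (h0 _) (h0 _)) (hx.trans hp).le

/-! ### The Laplace transform of a fixed point -/

theorem lintegral_exp_Ioc {a b : ℝ} (ha : 0 < a) (hb : 0 < b) :
    ∫⁻ x in Ioc 0 b, ENNReal.ofReal (exp (-a * x)) = ENNReal.ofReal ((1 - exp (-a * b)) / a) := by
  rw [← ofReal_integral_eq_lintegral_ofReal
    (Continuous.integrableOn_Ioc (by fun_prop)) (ae_of_all _ fun x => (exp_pos _).le),
    ← intervalIntegral.integral_of_le hb.le]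
  have hd : ∀ x ∈ uIcc 0 b, HasDerivAt (fun x => -exp (-a * x) / a) (exp (-a * x)) x := by
    intro x _
    have := (((hasDerivAt_id x).const_mul (-a)).exp.neg).div_const a
    refine this.congr_deriv ?_
    simp only [id]
    field_simp
  rw [intervalIntegral.integral_eq_sub_of_hasDerivAt hd
    (Continuous.intervalIntegrable (by fun_prop) _ _)]
  congr 1
  simp
  ring

theorem ofReal_lap {y : ℝ → ℝ} (hy : IntegrableOn y (Ioi 0)) (h0 : ∀ x, 0 ≤ y x)
    {s : ℝ} (hs : 0 ≤ s) :
    ENNReal.ofReal (lap y s) =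
      ∫⁻ u in Ioi (0:ℝ), ENNReal.ofReal (exp (-s * u)) * ENNReal.ofReal (y u) := by
  rw [lap, ofReal_integral_eq_lintegral_ofReal (integrableOn_exp_mul hy hs)
    (ae_of_all _ fun u => mul_nonneg (exp_pos _).le (h0 u))]
  simp_rw [ENNReal.ofReal_mul (exp_pos _).le]

/-- Tonelli's theorem for the Laplace transform of `T y`, using
`∫₀^w e^{-sx} dx = (1 - e^{-sw})/s`. -/
theorem lintegral_exp_Tgas {y : ℝ → ℝ} (hy : IntegrableOn y (Ioi 0)) (h0 : ∀ x, 0 ≤ y x)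
    {s : ℝ} (hs : 0 < s) :
    ∫⁻ x in Ioi (0:ℝ), ENNReal.ofReal (exp (-s * x)) * ENNReal.ofReal (Tgas y x) =
      ∫⁻ p, gasKernel y p * ENNReal.ofReal ((1 - exp (-s * (p.1 + p.2))) / s) ∂quadrant := by
  have hG := aemeasurable_gasKernel hy
  have hset : MeasurableSet {q : ℝ × (ℝ × ℝ) | q.1 < q.2.1 + q.2.2} :=
    measurableSet_lt (by fun_prop) (by fun_prop)
  have hG' : AEMeasurable (fun q : ℝ × (ℝ × ℝ) => gasKernel y q.2)
      ((volume.restrict (Ioi (0:ℝ))).prod quadrant) := hG.comp_snd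
  calc _ = ∫⁻ x in Ioi (0:ℝ), (∫⁻ p, ENNReal.ofReal (exp (-s * x)) *
        {q : ℝ × (ℝ × ℝ) | q.1 < q.2.1 + q.2.2}.indicator (fun q => gasKernel y q.2) (x, p)
          ∂quadrant) := by
        refine setLIntegral_congr_fun measurableSet_Ioi fun x hx => ?_
        rw [ofReal_Tgas hy h0 hx, lintegral_const_mul' _ _ ENNReal.ofReal_ne_top,
          ← lintegral_indicator (measurableSet_sum_gt x)]
        rfl
    _ = ∫⁻ p, (∫⁻ x in Ioi (0:ℝ), ENNReal.ofReal (exp (-s * x)) *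
        {q : ℝ × (ℝ × ℝ) | q.1 < q.2.1 + q.2.2}.indicator (fun q => gasKernel y q.2) (x, p))
          ∂quadrant := by
        refine lintegral_lintegral_swap (AEMeasurable.mul ?_ (hG'.indicator hset))
        fun_prop
    _ = _ := by
        refine lintegral_congr_ae ?_
        filter_upwards [ae_quadrant_pos] with p hp
        have hw : 0 < p.1 + p.2 := add_pos hp.1 hp.2
        rw [← lintegral_exp_Ioc hs hw, mul_comm, ← lintegral_mul_const _ (by fun_prop),
          ← setLIntegral_congr Ioo_ae_eq_Ioc, ← Ioi_inter_Iio, inter_comm,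
          ← Measure.restrict_restrict measurableSet_Iio, ← lintegral_indicator measurableSet_Iio]
        refine lintegral_congr fun x => ?_
        by_cases hx : x < p.1 + p.2
        · rw [indicator_of_mem (show x ∈ Iio (p.1 + p.2) from hx), indicator_of_mem]
          exact hx
        · rw [indicator_of_notMem (show x ∉ Iio (p.1 + p.2) from hx), indicator_of_notMem, mul_zero]
          exact hx

/-- Tonelli's theorem for the integrated square of the Laplace transform, using
`∫₀^s e^{-tw} dt = (1 - e^{-sw})/w`. -/
theorem lintegral_lap_sq {y : ℝ → ℝ} (hy : IntegrableOn y (Ioi 0)) (h0 : ∀ x, 0 ≤ y x)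
    {s : ℝ} (hs : 0 < s) :
    ∫⁻ t in Ioc 0 s, ENNReal.ofReal (lap y t ^ 2) =
      ENNReal.ofReal s *
      ∫⁻ p, gasKernel y p * ENNReal.ofReal ((1 - exp (-s * (p.1 + p.2))) / s) ∂quadrant := by
  have hm := hy.aemeasurable
  have h1 : AEMeasurable (fun p : ℝ × ℝ => y p.1) quadrant := hm.comp_fst
  have h2 : AEMeasurable (fun p : ℝ × ℝ => y p.2) quadrant := hm.comp_snd
  have h3 : AEMeasurable (fun p : ℝ × ℝ => ENNReal.ofReal (y p.1) * ENNReal.ofReal (y p.2))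
    quadrant := by fun_prop
  calc _ = ∫⁻ t in Ioc 0 s, (∫⁻ p, ENNReal.ofReal (exp (-(p.1 + p.2) * t)) *
        (ENNReal.ofReal (y p.1) * ENNReal.ofReal (y p.2)) ∂quadrant) := by
        refine setLIntegral_congr_fun measurableSet_Ioc fun t ht => ?_
        have hl : 0 ≤ lap y t := integral_nonneg fun u => mul_nonneg (exp_pos _).le (h0 u)
        rw [ENNReal.ofReal_pow hl,
          ofReal_lap hy h0 ht.1.le, sq, ← lintegral_prod_mul (by fun_prop) (by fun_prop)]
        refine lintegral_congr fun p => ?_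
        rw [show -(p.1 + p.2) * t = -t * p.1 + -t * p.2 by ring, exp_add,
          ENNReal.ofReal_mul (exp_pos _).le]
        ring
    _ = ∫⁻ p, (∫⁻ t in Ioc 0 s, ENNReal.ofReal (exp (-(p.1 + p.2) * t)) *
        (ENNReal.ofReal (y p.1) * ENNReal.ofReal (y p.2))) ∂quadrant := by
        refine lintegral_lintegral_swap (AEMeasurable.mul ?_ h3.comp_snd)
        fun_prop
    _ = ∫⁻ p, ENNReal.ofReal s * (gasKernel y p *
          ENNReal.ofReal ((1 - exp (-s * (p.1 + p.2))) / s)) ∂quadrant := by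
        refine lintegral_congr_ae ?_
        filter_upwards [ae_quadrant_pos] with p hp
        have hw : 0 < p.1 + p.2 := add_pos hp.1 hp.2
        rw [lintegral_mul_const _ (by fun_prop), lintegral_exp_Ioc hw hs, gasKernel,
          show (1 - exp (-(p.1 + p.2) * s)) / (p.1 + p.2) =
            s * (1 / (p.1 + p.2)) * ((1 - exp (-s * (p.1 + p.2))) / s) by
            rw [show -(p.1 + p.2) * s = -s * (p.1 + p.2) by ring]
            field_simp,
          ENNReal.ofReal_mul (by positivity), ENNReal.ofReal_mul hs.le]
        ring
    _ = _ := lintegral_const_mul' _ _ ENNReal.ofReal_ne_top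

/-- The Laplace transform `Y` of a fixed point of `T` satisfies `s Y(s) = ∫₀^s Y(t)² dt`: both sides
are the same integral over the quadrant, by `lintegral_exp_Tgas` and `lintegral_lap_sq`. -/
theorem lap_integral_eq {y : ℝ → ℝ} (hy : IntegrableOn y (Ioi 0)) (h0 : ∀ x, 0 ≤ y x)
    (hfix : ∀ᵐ x ∂(volume.restrict (Ioi (0:ℝ))), Tgas y x = y x) {s : ℝ} (hs : 0 < s) :
    s * lap y s = ∫ t in (0:ℝ)..s, lap y t ^ 2 := by
  have hl0 : 0 ≤ lap y s := integral_nonneg fun u => mul_nonneg (exp_pos _).le (h0 u)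
  rw [intervalIntegral.integral_of_le hs.le, ← ENNReal.ofReal_eq_ofReal_iff (by positivity)
    (integral_nonneg fun t => sq_nonneg _), ofReal_integral_eq_lintegral_ofReal ?_
    (ae_of_all _ fun t => sq_nonneg _), lintegral_lap_sq hy h0 hs, ← lintegral_exp_Tgas hy h0 hs,
    ENNReal.ofReal_mul hs.le, ofReal_lap hy h0 hs.le]
  · congr 1
    refine lintegral_congr_ae ?_
    filter_upwards [hfix] with x hx
    rw [hx]
  · refine IntegrableOn.mono_set (t := Icc 0 s) ?_ Ioc_subset_Icc_self
    exact (((continuousOn_lap hy).mono Icc_subset_Ici_self).pow 2).integrableOn_Icc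

/-! ### Exponential densities are fixed points -/

/-- Integrating a function of `u + v` over the quadrant: after the shear `w = u + v`
the variable `u` ranges over `(0, w)`, which contributes the factor `w`. -/
theorem lintegral_quadrant_sum {φ : ℝ → ℝ≥0∞} (hφ : Measurable φ) :
    ∫⁻ p, φ (p.1 + p.2) ∂quadrant = ∫⁻ w, φ w * ENNReal.ofReal w := by
  have hset : MeasurableSet {q : ℝ × ℝ | 0 < q.1 ∧ q.1 < q.2} :=
    (measurableSet_lt measurable_const measurable_fst).inter
      (measurableSet_lt measurable_fst measurable_snd)
  calc _ = ∫⁻ u in Ioi (0:ℝ), ∫⁻ v in Ioi (0:ℝ), φ (u + v) :=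
        lintegral_prod _ (by fun_prop)
    _ = ∫⁻ u, ∫⁻ w, {q : ℝ × ℝ | 0 < q.1 ∧ q.1 < q.2}.indicator (fun q => φ q.2) (u, w) := by
        rw [← lintegral_indicator measurableSet_Ioi]
        refine lintegral_congr fun u => ?_
        rw [← lintegral_add_left_eq_self _ u]
        by_cases hu : 0 < u
        · rw [indicator_of_mem (show u ∈ Ioi 0 from hu), ← lintegral_indicator measurableSet_Ioi]
          refine lintegral_congr fun v => ?_
          simp [indicator, hu]
        · simp [indicator, hu]
    _ = ∫⁻ w, ∫⁻ u, {q : ℝ × ℝ | 0 < q.1 ∧ q.1 < q.2}.indicator (fun q => φ q.2) (u, w) :=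
        lintegral_lintegral_swap
          ((hφ.comp measurable_snd).indicator hset).aemeasurable
    _ = _ := by
        refine lintegral_congr fun w => ?_
        rw [show ENNReal.ofReal w = volume (Ioo 0 w) by simp, ← lintegral_indicator_const
          measurableSet_Ioo]
        rfl

/-- Exponential densities are fixed by `T`: the integrand depends on `w = u + v` only, and the
factor `w` of `lintegral_quadrant_sum` cancels the weight `1/w`. -/
theorem Tgas_exp {δ : ℝ} (hδ : 0 < δ) {x : ℝ} (hx : 0 < x) :
    Tgas (fun x => δ * exp (-δ * x)) x = δ * exp (-δ * x) := by
  have h0 : ∀ x, 0 ≤ δ * exp (-δ * x) := fun x => by positivity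
  rw [← ENNReal.ofReal_eq_ofReal_iff (Tgas_nonneg h0 x) (h0 x),
    ofReal_Tgas (integrableOn_exp_density hδ) h0 hx, ← lintegral_indicator (measurableSet_sum_gt x)]
  calc _ = ∫⁻ p, (Ioi x).indicator (fun w => ENNReal.ofReal (δ ^ 2 * exp (-δ * w) * (1 / w)))
          (p.1 + p.2) ∂quadrant := by
        refine lintegral_congr fun p => ?_
        simp only [indicator, mem_ofPred_eq, mem_Ioi, gasKernel]
        split_ifs with hp
        · rw [← ENNReal.ofReal_mul (h0 _), ← ENNReal.ofReal_mul (mul_nonneg (h0 _) (h0 _)),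
            mul_add, exp_add]
          congr 1
          ring
        · rfl
    _ = ∫⁻ w in Ioi x, ENNReal.ofReal (δ ^ 2 * exp (-δ * w)) := by
        rw [lintegral_quadrant_sum (Measurable.indicator (by fun_prop) measurableSet_Ioi),
          ← lintegral_indicator measurableSet_Ioi]
        refine lintegral_congr fun w => ?_
        simp only [indicator, mem_Ioi]
        split_ifs with hw
        · have : 0 < w := hx.trans hw
          rw [← ENNReal.ofReal_mul (by positivity)]
          congr 1
          field_simp
        · simp
    _ = _ := by
        rw [← ofReal_integral_eq_lintegral_ofReal
          ((exp_neg_integrableOn_Ioi x hδ).const_mul (δ ^ 2)) (ae_of_all _ fun w => by positivity),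
          integral_const_mul, integral_exp_mul_Ioi (by linarith), neg_div_neg_eq]
        congr 1
        field_simp

/-- for every `λ ∈ (0,1]`, the zero function and the exponential
densities `δ e^{-δx}`, `δ > 0`, are exactly the fixed points of `T_λ` among
nonnegative integrable functions on `[0,∞)` (up to almost-everywhere equality). -/
theorem Tlam_fixed_points (l : ℝ) (hl : l ∈ Ioc (0:ℝ) 1)
    (y : ℝ → ℝ) (hy_nonneg : ∀ x, 0 ≤ y x)
    (hy_int : IntegrableOn y (Ioi 0)) :
    (∀ᵐ x ∂(volume.restrict (Ioi (0:ℝ))), Tlam l y x = y x) ↔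
      ((∀ᵐ x ∂(volume.restrict (Ioi (0:ℝ))), y x = 0) ∨
        ∃ δ > (0:ℝ), ∀ᵐ x ∂(volume.restrict (Ioi (0:ℝ))), y x = δ * exp (-δ * x)) := by
  -- Since `l ≠ 0`, the operators `T_l` and `T` have the same fixed points.
  have hT : ∀ x, Tlam l y x = y x ↔ Tgas y x = y x := fun x => by
    rw [Tlam, ← mul_right_inj' hl.1.ne' (b := Tgas y x)]
    constructor <;> intro h <;> linarith
  simp_rw [hT]
  constructor
  · intro hfix
    by_cases hne : ∀ᵐ x ∂(volume.restrict (Ioi (0:ℝ))), y x = 0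
    · exact Or.inl hne
    · exact Or.inr (exponential_of_lap hy_int hy_nonneg hne
        fun s hs => lap_integral_eq hy_int hy_nonneg hfix hs)
  · rintro (h | ⟨δ, hδ, h⟩)
    · filter_upwards [h] with x hx
      rw [hx, Tgas_congr (z := fun _ => 0) h]
      simp [Tgas]
    · filter_upwards [h, ae_restrict_mem measurableSet_Ioi] with x hx hx0
      rw [hx, Tgas_congr h, Tgas_exp hδ hx0]
end
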